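/- arXiv:0908.1159 — 2 statements merged into one kernel-verified Lean document; each statement's English description precedes it below -/
import Mathlib

section
/- K_TBB(4) = 95: among all Turing machines with at most 4 states that halt on the all-zero tape with a computed word containing exactly BB(4) = 12 ones, the minimum number of steps taken before halting is exactly 95. -/
/-- Head movement directions. -/
inductive Dir : Type
  | left | stay | right

/-- Displacement of the head for each direction. -/
def Dir.move : Dir → ℤ
  | .left => -1
  | .stay => 0
  | .right => 1

/-- A configuration of a Turing machine with state type `Q`: current state,
head position and the two-way infinite binary tape. -/
structure Cfg (Q : Type) where
  state : Q
  head : ℤ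
  tape : ℤ → Bool

/-- One step of the machine with partial transition function `f`
(`none` if the machine halts, i.e. `f` is undefined on the current pair). -/
def stepTM {Q : Type} (f : Q × Bool → Option (Q × Bool × Dir)) (c : Cfg Q) :
    Option (Cfg Q) :=
  (f (c.state, c.tape c.head)).map fun qbd =>
    ⟨qbd.1, c.head + qbd.2.2.move, Function.update c.tape c.head qbd.2.1⟩

/-- Running `t` steps (returns `none` if the machine halts strictly before `t` steps). -/
def stepsTM {Q : Type} (f : Q × Bool → Option (Q × Bool × Dir)) :
    ℕ → Cfg Q → Option (Cfg Q)
  | 0, c => some c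
  | t + 1, c => (stepTM f c).bind (stepsTM f t)

/-- Initial configuration: initial state `q0`, head at `0`, all-zero tape. -/
def initCfg {Q : Type} (q0 : Q) : Cfg Q := ⟨q0, 0, fun _ => false⟩

/-- The machine is halted in configuration `c`: the transition function is
undefined on the current (state, symbol) pair. -/
def Halted {Q : Type} (f : Q × Bool → Option (Q × Bool × Dir)) (c : Cfg Q) : Prop :=
  f (c.state, c.tape c.head) = none

/-- `w` is the tape contents from the leftmost 1 to the rightmost 1
(the empty word if the tape contains no 1). -/
def TapeWord (tape : ℤ → Bool) (w : List Bool) : Prop :=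
  ∃ i : ℤ,
    (∀ k : ℕ, k < w.length → w.getD k false = tape (i + k)) ∧
    (∀ j : ℤ, tape j = true → i ≤ j ∧ j < i + w.length) ∧
    (w ≠ [] → w.getD 0 false = true ∧ w.getLastD false = true)

/-- The machine with transition function `f` and initial state `q0`, started on
the all-zero tape, halts after exactly `t` steps computing the word `w`. -/
def Computes {Q : Type} (f : Q × Bool → Option (Q × Bool × Dir)) (q0 : Q)
    (w : List Bool) (t : ℕ) : Prop :=
  ∃ c : Cfg Q, stepsTM f t (initCfg q0) = some c ∧ Halted f c ∧ TapeWord c.tape w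

/-!
Suppose a machine leaves twelve 1s after fewer than 95 steps. Merging each run of `stay` transitions
with the move that follows it does not lengthen the computation, and after renaming states and
mirroring the tape the first 1 is written while moving right from state 0 into state 1. Up to
symmetry only eight transitions out of state 1 on a blank cell do not run off to the right forever.
The pair at which the machine halts is undefined, so five of the eight table entries are left open,
and since the first 95 steps never use another undefined entry we may suppose that these five are
defined. The resulting `16 ^ 5` machines are run simultaneously, one per bit position of a natural
number serving as a bit vector. Merging `stay` moves may hide a last write; a case with eleven 1s
remains, in which a second entry is undefined and four are left open.
-/

namespace BusyBeaver

open Function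

/-! ### Ones on a tape -/

/-- A two-way infinite binary tape. -/
abbrev Tape := ℤ → Bool

/-- The tape carrying no 1. -/
def blank : Tape := fun _ => false

/-- The number of 1s on a tape, possibly infinite. -/
noncomputable def ones (T : Tape) : ℕ∞ := {z | T z = true}.encard

theorem ones_blank : ones blank = 0 := by simp [ones, blank]

theorem ones_comp_of_bijective {φ : ℤ → ℤ} (hφ : Bijective φ) (T : Tape) :
    ones (T ∘ φ) = ones T :=
  Set.encard_preimage_of_bijective hφ {z | T z = true}

theorem ones_eq_encard_ne_add (T : Tape) (i : ℤ) :
    ones T = {z | z ≠ i ∧ T z = true}.encard + (T i).toNat := by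
  cases hi : T i with
  | false =>
    have : {z | T z = true} = {z | z ≠ i ∧ T z = true} := by
      ext z; simpa using fun h (e : z = i) => by simp_all
    simp [ones, this]
  | true =>
    have : {z | T z = true} = insert i {z | z ≠ i ∧ T z = true} := by
      ext z; by_cases e : z = i <;> simp [e, hi]
    rw [ones, this, Set.encard_insert_of_notMem (by simp)]
    rfl

theorem ones_update_add (T : Tape) (i : ℤ) (w : Bool) :
    ones (update T i w) + (T i).toNat = ones T + w.toNat := by
  have : {z | z ≠ i ∧ update T i w z = true} = {z | z ≠ i ∧ T z = true} := by
    ext z; simp +contextual [update_apply]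
  rw [ones_eq_encard_ne_add _ i, ones_eq_encard_ne_add T i, this, update_self]
  exact add_right_comm _ _ _

theorem exists_ones_update_eq {T : Tape} {n : ℕ} (hn : ones T = n) (i : ℤ) (w : Bool) :
    ∃ n' : ℕ, ones (update T i w) = n' ∧ n' + (T i).toNat = n + w.toNat := by
  have h := ones_update_add T i w
  rw [hn] at h
  have hfin : ones (update T i w) ≠ ⊤ := ne_top_of_le_ne_top (ENat.natCast_ne_top (n + w.toNat))
    (le_self_add.trans_eq (by exact_mod_cast h))
  obtain ⟨n', hn'⟩ := ENat.ne_top_iff_exists.1 hfin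
  exact ⟨n', hn'.symm, by rw [← hn'] at h; exact_mod_cast h⟩

theorem ones_eq_count {w : List Bool} {T : Tape} {i : ℤ}
    (hw : ∀ k < w.length, w.getD k false = T (i + k))
    (hT : ∀ j, T j = true → i ≤ j ∧ j < i + w.length) : ones T = w.count true := by
  induction w generalizing T i with
  | nil =>
    have : T = blank := funext fun j => Bool.eq_false_iff.2 fun h => by
      have := hT j h
      simp only [List.length_nil, Nat.cast_zero] at this
      omega
    simp [this, ones_blank]
  | cons b w ih =>
    have hb : T i = b := by simpa using (hw 0 (by simp)).symm
    have hrest : ones (update T i false) = w.count true := by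
      refine ih (i := i + 1) (fun k hk => ?_) fun j hj => ?_
      · rw [update_of_ne (by omega), add_assoc, add_comm 1, ← Nat.cast_succ,
          ← hw (k + 1) (by simpa using hk), List.getD_cons_succ]
      · obtain ⟨hne, hj⟩ : j ≠ i ∧ T j = true := by simpa [update_apply] using hj
        have := hT j hj
        simp only [List.length_cons, Nat.cast_succ] at this
        omega
    have := ones_update_add T i false
    rw [hrest, hb] at this
    rw [← add_zero (ones T), ← Nat.cast_zero, ← Bool.toNat_false, ← this]
    cases b <;> simp

theorem ones_eq_count_of_tapeWord {T : Tape} {w : List Bool} (h : TapeWord T w) :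
    ones T = w.count true :=
  let ⟨_, hw, hT, _⟩ := h
  ones_eq_count hw hT

/-! ### Machines that move at every step -/

/-- A machine without `stay` moves. The last component of a transition is the direction of the
move, `true` meaning right. -/
abbrev Machine (Q : Type) := Q × Bool → Option (Q × Bool × Bool)

/-- The unit displacement in direction `d`. -/
def unit (d : Bool) : ℤ := bif d then 1 else -1

theorem unit_false : unit false = -1 := rfl

theorem unit_true : unit true = 1 := rfl

/-- The tape seen from the head, which always stands at `0`, after writing `w` and moving in
direction `d`. -/
def move (T : Tape) (w d : Bool) : Tape := fun i => update T 0 w (i + unit d)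

theorem ones_move (T : Tape) (w d : Bool) : ones (move T w d) = ones (update T 0 w) :=
  ones_comp_of_bijective (Equiv.addRight (unit d)).bijective _

theorem exists_ones_move_eq {T : Tape} {n : ℕ} (hn : ones T = n) (w d : Bool) :
    ∃ n' : ℕ, ones (move T w d) = n' ∧ n' + (T 0).toNat = n + w.toNat :=
  ones_move T w d ▸ exists_ones_update_eq hn 0 w

theorem move_update (T : Tape) (b w d : Bool) : move (update T 0 b) w d = move T w d := by
  funext i
  simp only [move, update_idem]

theorem move_blank_false (d : Bool) : move blank false d = blank :=
  funext fun i => by by_cases h : i + unit d = 0 <;> simp [move, blank, h]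

/-- `HaltsAt g t q T q' T'`: started in state `q` on the tape `T`, the machine `g` halts after
exactly `t` steps in state `q'` on the tape `T'`, both tapes being seen from the head. -/
inductive HaltsAt {Q : Type} (g : Machine Q) : ℕ → Q → Tape → Q → Tape → Prop
  | halted {q : Q} {T : Tape} (h : g (q, T 0) = none) : HaltsAt g 0 q T q T
  | step {t : ℕ} {q p q' : Q} {T T' : Tape} {w d : Bool} (h : g (q, T 0) = some (p, w, d))
      (ht : HaltsAt g t p (move T w d) q' T') : HaltsAt g (t + 1) q T q' T'

namespace HaltsAt

variable {Q Q' : Type} {g : Machine Q} {t : ℕ} {q p q' : Q} {T T' : Tape} {w d : Bool}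

theorem eq_none (h : HaltsAt g t q T q' T') : g (q', T' 0) = none := by
  induction h with
  | halted h => exact h
  | step _ _ ih => exact ih

theorem eq_of_eq_none (h : HaltsAt g t q T q' T') (hq : g (q, T 0) = none) :
    q' = q ∧ T' = T := by
  cases h with
  | halted => exact ⟨rfl, rfl⟩
  | step h => simp [hq] at h

theorem exists_of_eq_some (h : HaltsAt g t q T q' T') (hq : g (q, T 0) = some (p, w, d)) :
    ∃ s, t = s + 1 ∧ HaltsAt g s p (move T w d) q' T' := by
  cases h with
  | halted h => simp [hq] at h
  | step h ht =>
    obtain ⟨rfl, rfl, rfl⟩ : p = _ ∧ w = _ ∧ d = _ := by simpa [hq] using h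
    exact ⟨_, rfl, ht⟩

end HaltsAt

theorem unit_ne_zero (d : Bool) : unit d ≠ 0 := by cases d <;> decide

theorem move_natCast_succ_mul_unit (T : Tape) (w d : Bool) (k : ℕ) :
    move T w d (k * unit d) = T ((k + 1 : ℕ) * unit d) := by
  have : ((k + 1 : ℕ) : ℤ) * unit d ≠ 0 := mul_ne_zero (by omega) (unit_ne_zero d)
  rw [move, ← add_one_mul, ← Nat.cast_succ, update_of_ne this]

theorem not_haltsAt_of_escape {Q : Type} {g : Machine Q} {Z : Set Q} {d : Bool}
    (hZ : ∀ q ∈ Z, ∃ p ∈ Z, ∃ w, g (q, false) = some (p, w, d)) {t : ℕ} {q q' : Q}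
    {T T' : Tape} (hq : q ∈ Z) (hT : ∀ k : ℕ, T (k * unit d) = false) :
    ¬ HaltsAt g t q T q' T' := by
  intro h
  induction t using Nat.strong_induction_on generalizing q T with
  | _ t ih =>
    have hT0 : T 0 = false := by simpa using hT 0
    obtain ⟨p, hp, w, hg⟩ := hZ q hq
    obtain ⟨s, rfl, hs⟩ := h.exists_of_eq_some (hT0 ▸ hg)
    exact ih s s.lt_succ_self hp (fun k => by rw [move_natCast_succ_mul_unit, hT]) hs

/-- Mirror the tape at the head if `m` holds. -/
def reflect (m : Bool) (T : Tape) : Tape := fun i => T (bif m then -i else i)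

theorem reflect_apply_zero (m : Bool) (T : Tape) : reflect m T 0 = T 0 := by
  cases m <;> simp [reflect]

theorem ones_reflect (m : Bool) (T : Tape) : ones (reflect m T) = ones T := by
  cases m
  · rfl
  · exact ones_comp_of_bijective (Equiv.neg ℤ).bijective T

theorem reflect_move (m : Bool) (T : Tape) (w d : Bool) :
    reflect m (move T w d) = move (reflect m T) w (d ^^ m) := by
  cases m with
  | false => rw [Bool.xor_false]; rfl
  | true =>
    funext i
    have : -i + unit d = -(i + unit !d) := by cases d <;> simp [unit] <;> ring
    simp only [reflect, move, this, update_apply, cond_true, Bool.xor_true, neg_eq_zero]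

/-- Rename the states of `g` along `σ`, and exchange left and right if `m` holds. -/
def conj {Q Q' : Type} (σ : Q ≃ Q') (m : Bool) (g : Machine Q) : Machine Q' := fun p =>
  (g (σ.symm p.1, p.2)).map fun v => (σ v.1, v.2.1, v.2.2 ^^ m)

theorem conj_apply {Q Q' : Type} (σ : Q ≃ Q') (m : Bool) (g : Machine Q) (q : Q) (b : Bool) :
    conj σ m g (σ q, b) = (g (q, b)).map fun v => (σ v.1, v.2.1, v.2.2 ^^ m) := by
  simp [conj]

theorem HaltsAt.conj {Q Q' : Type} {g : Machine Q} {t : ℕ} {q q' : Q} {T T' : Tape}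
    (h : HaltsAt g t q T q' T') (σ : Q ≃ Q') (m : Bool) :
    HaltsAt (conj σ m g) t (σ q) (reflect m T) (σ q') (reflect m T') := by
  induction h with
  | halted h => exact .halted (by rw [reflect_apply_zero, conj_apply, h, Option.map_none])
  | step h _ ih =>
    rw [reflect_move] at ih
    exact .step (by rw [reflect_apply_zero, conj_apply, h, Option.map_some]) ih

/-! ### Eliminating stay moves -/

/-- The stay-free machine that performs a run of consecutive `stay` transitions of `f` together with
the first moving transition after it in one step. It halts when no moving transition is reached
within `n` steps of `f`. -/
def chase {Q : Type} (f : Q × Bool → Option (Q × Bool × Dir)) : ℕ → Machine Q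
  | 0, _ => none
  | n + 1, p => (f p).bind fun
    | (q, w, .left) => some (q, w, false)
    | (q, w, .stay) => chase f n (q, w)
    | (q, w, .right) => some (q, w, true)

/-- The tape of `c` seen from the head. -/
def headTape {Q : Type} (c : Cfg Q) : Tape := fun i => c.tape (i + c.head)

theorem headTape_zero {Q : Type} (c : Cfg Q) : headTape c 0 = c.tape c.head := by simp [headTape]

theorem ones_headTape {Q : Type} (c : Cfg Q) : ones (headTape c) = ones c.tape :=
  ones_comp_of_bijective (Equiv.addRight c.head).bijective _

theorem headTape_write {Q : Type} (c : Cfg Q) (p : Q) (w : Bool) (a i : ℤ) :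
    headTape ⟨p, c.head + a, update c.tape c.head w⟩ i = update (headTape c) 0 w (i + a) := by
  have : i + (c.head + a) = c.head ↔ i + a = 0 := by omega
  simp [headTape, update_apply, this, add_assoc, add_comm a]

theorem headTape_move {Q : Type} (c : Cfg Q) (p : Q) (w d : Bool) :
    headTape ⟨p, c.head + unit d, update c.tape c.head w⟩ = move (headTape c) w d :=
  funext (headTape_write c p w (unit d))

theorem chase_eq_none {Q : Type} {f : Q × Bool → Option (Q × Bool × Dir)} {p : Q × Bool}
    (h : f p = none) (n : ℕ) : chase f n p = none := by
  cases n <;> simp [chase, h]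

theorem exists_haltsAt_chase {Q : Type} {f : Q × Bool → Option (Q × Bool × Dir)} {N t : ℕ}
    {c' : Cfg Q} (hc' : Halted f c') (hN : t < N) {k : ℕ} (hk : t < k) {c : Cfg Q} {q : Q}
    {T : Tape} (hs : stepsTM f t c = some c')
    (hq : chase f N (q, T 0) = chase f k (c.state, c.tape c.head))
    (hT : headTape c = update T 0 (c.tape c.head)) :
    ∃ s ≤ t, ∃ q' T', HaltsAt (chase f N) s q T q' T' ∧
      headTape c' = update T' 0 (c'.tape c'.head) := by
  induction t generalizing k c q T with
  | zero =>
    obtain rfl : c = c' := by simpa [stepsTM] using hs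
    exact ⟨0, le_rfl, q, T, .halted (hq.trans (chase_eq_none hc' k)), hT⟩
  | succ t ih =>
    obtain ⟨k, rfl⟩ := Nat.exists_eq_succ_of_ne_zero (Nat.ne_zero_of_lt hk)
    simp only [stepsTM, stepTM, Option.bind_eq_some_iff, Option.map_eq_some_iff] at hs
    obtain ⟨_, ⟨⟨p, w, d⟩, hf, rfl⟩, hs⟩ := hs
    simp only [chase, hf, Option.bind_some] at hq
    have hmove (e : Bool) (he : d.move = unit e) (hq : chase f N (q, T 0) = some (p, w, e)) :
        ∃ s ≤ t + 1, ∃ q' T', HaltsAt (chase f N) s q T q' T' ∧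
          headTape c' = update T' 0 (c'.tape c'.head) := by
      have hT' := headTape_move c p w e
      rw [hT, move_update, ← he] at hT'
      have hcell := congrFun hT' 0
      rw [headTape_zero] at hcell
      obtain ⟨s, hst, q', T', h, hT''⟩ := ih (by omega) (by omega) hs
        (congrArg (fun b => chase f N (p, b)) hcell.symm) (by rw [hT', hcell, update_eq_self])
      exact ⟨s + 1, by omega, q', T', .step hq h, hT''⟩
    cases d with
    | left => exact hmove false rfl hq
    | right => exact hmove true rfl hq
    | stay =>
      simp only [Dir.move, add_zero] at hs hq
      have hT' : headTape ⟨p, c.head, update c.tape c.head w⟩ = update T 0 w := by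
        funext i
        simpa only [add_zero, hT, update_idem] using headTape_write c p w 0 i
      obtain ⟨s, hst, h⟩ := ih (by omega) (Nat.lt_of_succ_lt_succ hk) hs
        (by simpa using hq) (by simpa using hT')
      exact ⟨s, by omega, h⟩

/-! ### Bit-sliced simulation -/

/-- The pairs (state, scanned symbol) of a four-state machine. -/
abbrev Pair := Fin 4 × Bool

/-- All pairs, in the order in which their transitions are laid out in a lane number. -/
def pairs : List Pair :=
  [(0, false), (0, true), (1, false), (1, true), (2, false), (2, true), (3, false), (3, true)]

/-- The binary code of an entry of the transition table: bits 3 and 2 give the new state, bit 1 the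
symbol written, bit 0 the direction, and bit 4 marks an undefined entry. -/
def code : Option (Fin 4 × Bool × Bool) → ℕ
  | none => 16
  | some (q, w, d) => 4 * q + 2 * w.toNat + d.toNat

/-- A partial prescription of a transition table, as an association list. -/
abbrev Pins := List (Pair × Option (Fin 4 × Bool × Bool))

/-- The pairs whose transition is left open by `S`. -/
def freePairs (S : Pins) : List Pair := pairs.filter fun p => (S.lookup p).isNone

/-- The plane with bit 1 in each of its `2 ^ m` lanes. -/
def full (m : ℕ) : ℕ := 2 ^ 2 ^ m - 1

/-- The plane of `2 ^ m` lanes whose lane `j` holds bit `k` of `j`. -/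
def pattern (k : ℕ) : ℕ → ℕ
  | 0 => 0
  | m + 1 => if k = m then full m <<< 2 ^ m else pattern k m <<< 2 ^ m + pattern k m

/-- The plane with bit `b` in each of its `2 ^ m` lanes. -/
def constPlane (m : ℕ) (b : Bool) : ℕ := bif b then full m else 0

/-- The number of bits that determine the machine prescribed by `S`, four for each open pair. -/
def width (S : Pins) : ℕ := 4 * (freePairs S).length

/-- The transition tables of all the `2 ^ width S` machines prescribed by `S` that halt only where
`S` demands it: lane `j` of `table S k p` is bit `k` of the code of the transition at `p` of the
machine whose transitions at the open pairs are the base 16 digits of `j`. -/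
def table (S : Pins) (k : ℕ) (p : Pair) : ℕ :=
  match S.lookup p with
  | some v => constPlane (width S) ((code v).testBit k)
  | none => if k < 4 then pattern (4 * (freePairs S).idxOf p + k) (width S) else 0

/-- The plane taking its bits from `x` in the lanes where `d` has bit 1 and from `y` elsewhere. -/
def mux (d x y : ℕ) : ℕ := y ^^^ (d &&& (x ^^^ y))

/-- `mux d` on corresponding planes of two lists padded with zero planes. -/
def merge (d : ℕ) : List ℕ → List ℕ → List ℕ
  | [], ys => ys.map (mux d 0)
  | x :: xs, [] => mux d x 0 :: merge d xs []
  | x :: xs, y :: ys => mux d x y :: merge d xs ys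

/-- The plane that agrees with `V p` in the lanes of `E p`, for disjoint planes `E p`. -/
def select (E V : Pair → ℕ) : ℕ :=
  E (0, false) &&& V (0, false) ||| E (0, true) &&& V (0, true) |||
  E (1, false) &&& V (1, false) ||| E (1, true) &&& V (1, true) |||
  E (2, false) &&& V (2, false) ||| E (2, true) &&& V (2, true) |||
  E (3, false) &&& V (3, false) ||| E (3, true) &&& V (3, true)

/-- Bit-sliced counters, least significant plane first: in the lanes of `x` the counter is
decremented where `t` has bit 1 and incremented elsewhere. -/
def ripple (t : ℕ) : ℕ → List ℕ → List ℕ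
  | _, [] => []
  | x, k :: ks => (k ^^^ x) :: ripple t (x &&& (k ^^^ t)) ks

/-- The bit-sliced configurations of a batch of machines: the lanes still running, the two bits of
the state, the scanned cell, the cells to the left and to the right of the head, nearest first, and
the bits of a counter of 1s, least significant first. -/
structure Planes where
  (alive hi lo cell : ℕ)
  (left right count : List ℕ)

/-- The lanes of `a` in which `x` has bit `b`. -/
def literal (b : Bool) (a x : ℕ) : ℕ := bif b then a &&& x else a ^^^ (a &&& x)

/-- The running lanes whose state and scanned symbol are `p`. -/
def Planes.locate (P : Planes) (p : Pair) : ℕ :=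
  literal p.2 (literal (p.1.val.testBit 0) (literal (p.1.val.testBit 1) P.alive P.hi) P.lo) P.cell

/-- One step of all the machines with transition tables `V`. -/
def Planes.step (V : ℕ → Pair → ℕ) (P : Planes) : Planes :=
  let value k := select P.locate (V k)
  { alive := P.alive ^^^ value 4
    hi := value 3
    lo := value 2
    cell := mux (value 0) (P.right.getD 0 0) (P.left.getD 0 0)
    left := merge (value 0) (value 1 :: P.left) P.left.tail
    right := merge (value 0) P.right.tail (value 1 :: P.right)
    count := ripple P.cell (P.cell ^^^ value 1) P.count }

/-- Within fewer than `n` steps, no lane halts while bit 4 of its counter is set. -/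
def run (V : ℕ → Pair → ℕ) : ℕ → Planes → Bool
  | 0, _ => true
  | n + 1, P => P.alive == 0 ||
      (select P.locate (V 4) &&& P.count.getD 4 0 == 0 && run V n (P.step V))

/-- The initial configuration in `2 ^ m` lanes. The five-bit counters start at `16 - b`, so that
bit 4 is set as long as the number of 1s is at least `b` and less than `b + 16`. -/
def initial (m b : ℕ) : Planes :=
  ⟨full m, 0, 0, 0, [], [], (List.range 5).map fun i => constPlane m ((16 - b).testBit i)⟩

/-- No machine prescribed by `S` halts within fewer than 95 steps at a pair where `S` demands it
with at least `b` and fewer than `b + 16` ones. -/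
def passes (b : ℕ) (S : Pins) : Bool := run (table S) 95 (initial (width S) b)

theorem testBit_full (m : ℕ) {j : ℕ} (hj : j < 2 ^ m) : (full m).testBit j = true := by
  simp [full, Nat.testBit_two_pow_sub_one, hj]

theorem testBit_constPlane {m j : ℕ} (hj : j < 2 ^ m) (b : Bool) :
    (constPlane m b).testBit j = b := by
  cases b <;> simp [constPlane, testBit_full m hj]

theorem pattern_lt (k m : ℕ) : pattern k m < 2 ^ 2 ^ m := by
  induction m with
  | zero => simp [pattern]
  | succ m ih =>
    have hfull : full m < 2 ^ 2 ^ m := Nat.sub_lt (by positivity) one_pos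
    rw [pattern, pow_succ, mul_two, pow_add]
    split <;> rw [Nat.shiftLeft_eq] <;> nlinarith

theorem testBit_pattern {k m : ℕ} (hk : k < m) {j : ℕ} (hj : j < 2 ^ m) :
    (pattern k m).testBit j = j.testBit k := by
  induction m generalizing j with
  | zero => omega
  | succ m ih =>
    rw [pow_succ, mul_two] at hj
    rw [pattern]
    split
    case isTrue h =>
      subst h
      rw [Nat.testBit_shiftLeft]
      rcases lt_or_ge j (2 ^ k) with hlt | hle
      · simp [hlt.not_ge, Nat.testBit_lt_two_pow hlt]
      · obtain ⟨i, rfl⟩ := Nat.exists_eq_add_of_le hle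
        have hi : i < 2 ^ k := by omega
        simp [testBit_full k hi, Nat.testBit_two_pow_add_eq, Nat.testBit_lt_two_pow hi]
    case isFalse h =>
      rw [Nat.shiftLeft_eq, mul_comm, Nat.testBit_two_pow_mul_add _ (pattern_lt k m)]
      split
      case isTrue hlt => exact ih (by omega) hlt
      case isFalse hle =>
        obtain ⟨i, rfl⟩ := Nat.exists_eq_add_of_le (not_lt.1 hle)
        rw [Nat.add_sub_cancel_left, ih (by omega) (by omega),
          Nat.testBit_two_pow_add_gt (by omega)]

theorem testBit_mux (d x y j : ℕ) :
    (mux d x y).testBit j = bif d.testBit j then x.testBit j else y.testBit j := by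
  simp only [mux, Nat.testBit_xor, Nat.testBit_and]
  cases d.testBit j <;> cases x.testBit j <;> cases y.testBit j <;> rfl

theorem mux_zero_zero (d : ℕ) : mux d 0 0 = 0 := by simp [mux]

theorem getD_merge (d : ℕ) (xs ys : List ℕ) (i : ℕ) :
    (merge d xs ys).getD i 0 = mux d (xs.getD i 0) (ys.getD i 0) := by
  induction xs, ys using merge.induct generalizing i with
  | case1 ys =>
    simpa [merge, mux_zero_zero] using List.getD_map (f := mux d 0) (l := ys) (d := 0) (n := i)
  | case2 x xs ih => cases i with
    | zero => rfl
    | succ i => exact ih i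
  | case3 x xs y ys ih => cases i with
    | zero => rfl
    | succ i => exact ih i

theorem testBit_literal (b : Bool) (a x j : ℕ) :
    (literal b a x).testBit j = (a.testBit j && x.testBit j == b) := by
  cases b <;> simp only [literal, cond_true, cond_false, Nat.testBit_xor, Nat.testBit_and] <;>
    cases a.testBit j <;> cases x.testBit j <;> rfl

theorem testBit_select {E : Pair → ℕ} {j : ℕ} {p : Pair}
    (hE : ∀ r, (E r).testBit j = decide (r = p)) (V : Pair → ℕ) :
    (select E V).testBit j = (V p).testBit j := by
  simp only [select, Nat.testBit_or, Nat.testBit_and, hE]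
  obtain ⟨q, b⟩ := p
  fin_cases q <;> cases b <;> simp

/-- Lane `j` of the planes `ks` holds the lowest bits of `n`. -/
def Represents (j : ℕ) (ks : List ℕ) (n : ℕ) : Prop :=
  ∀ i < ks.length, (ks.getD i 0).testBit j = n.testBit i

theorem represents_cons {j k : ℕ} {ks : List ℕ} {n : ℕ} :
    Represents j (k :: ks) n ↔ k.testBit j = n.testBit 0 ∧ Represents j ks (n / 2) := by
  simp only [Represents, List.length_cons, Nat.forall_lt_succ_left, List.getD_cons_zero,
    List.getD_cons_succ, Nat.testBit_succ]

theorem length_ripple (t x : ℕ) (ks : List ℕ) : (ripple t x ks).length = ks.length := by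
  induction ks generalizing x with
  | nil => rfl
  | cons k ks ih => simp [ripple, ih]

theorem represents_ripple {j t x : ℕ} {ks : List ℕ} {n n' : ℕ} (hn : Represents j ks n)
    (h : n' + (x.testBit j && t.testBit j).toNat = n + (x.testBit j && !t.testBit j).toNat) :
    Represents j (ripple t x ks) n' := by
  induction ks generalizing x n n' with
  | nil => simp [Represents, ripple]
  | cons k ks ih =>
    obtain ⟨hk, hks⟩ := represents_cons.1 hn
    refine represents_cons.2 ⟨?_, ih hks ?_⟩
    all_goals
      simp only [Nat.testBit_xor, Nat.testBit_and, hk, Nat.testBit_zero]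
      revert h
      cases x.testBit j <;> cases t.testBit j <;> grind

/-- Lane `j` of `P` holds the configuration with state `q` and tape `T`, together with the count
`n` modulo 32. -/
structure Tracks (P : Planes) (j : ℕ) (q : Fin 4) (T : Tape) (n : ℕ) : Prop where
  alive : P.alive.testBit j = true
  hi : P.hi.testBit j = q.val.testBit 1
  lo : P.lo.testBit j = q.val.testBit 0
  cell : P.cell.testBit j = T 0
  left (i : ℕ) : (P.left.getD i 0).testBit j = T (-(i + 1))
  right (i : ℕ) : (P.right.getD i 0).testBit j = T (i + 1)
  length : P.count.length = 5
  count : Represents j P.count n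

theorem testBit_code_some (q : Fin 4) (w d : Bool) :
    (code (some (q, w, d))).testBit 0 = d ∧ (code (some (q, w, d))).testBit 1 = w ∧
    (code (some (q, w, d))).testBit 2 = q.val.testBit 0 ∧
    (code (some (q, w, d))).testBit 3 = q.val.testBit 1 ∧
    (code (some (q, w, d))).testBit 4 = false := by
  revert q w d
  decide

theorem getD_tail (xs : List ℕ) (i : ℕ) : xs.tail.getD i 0 = xs.getD (i + 1) 0 := by
  cases xs <;> rfl

namespace Tracks

variable {P : Planes} {j : ℕ} {q p : Fin 4} {T : Tape} {n : ℕ} {V : ℕ → Pair → ℕ}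

theorem testBit_locate (h : Tracks P j q T n) (r : Pair) :
    (P.locate r).testBit j = decide (r = (q, T 0)) := by
  simp only [Planes.locate, testBit_literal, h.alive, h.hi, h.lo, h.cell, Bool.true_and]
  suffices ∀ (q : Fin 4) (c : Bool) (r : Pair),
      (q.val.testBit 1 == r.1.val.testBit 1 && q.val.testBit 0 == r.1.val.testBit 0 && c == r.2) =
        decide (r = (q, c)) from this q (T 0) r
  decide

theorem testBit_select_locate (h : Tracks P j q T n) (k : ℕ) :
    (select P.locate (V k)).testBit j = (V k (q, T 0)).testBit j :=
  testBit_select h.testBit_locate _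

theorem testBit_cons_left (h : Tracks P j q T n) (v i : ℕ) :
    ((v :: P.left).getD i 0).testBit j = update T 0 (v.testBit j) (-i) := by
  cases i with
  | zero => simp
  | succ i => rw [List.getD_cons_succ, h.left, update_of_ne (by omega), Nat.cast_succ]

theorem testBit_cons_right (h : Tracks P j q T n) (v i : ℕ) :
    ((v :: P.right).getD i 0).testBit j = update T 0 (v.testBit j) i := by
  cases i with
  | zero => simp
  | succ i => rw [List.getD_cons_succ, h.right, update_of_ne (by omega), Nat.cast_succ]

theorem step (h : Tracks P j q T n) {w d : Bool}
    (hV : ∀ k ≤ 4, (V k (q, T 0)).testBit j = (code (some (p, w, d))).testBit k) {n' : ℕ}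
    (hn : n' + (T 0).toNat = n + w.toNat) : Tracks (P.step V) j p (move T w d) n' := by
  have hbit (k : ℕ) (hk : k ≤ 4) :
      (select P.locate (V k)).testBit j = (code (some (p, w, d))).testBit k :=
    (h.testBit_select_locate k).trans (hV k hk)
  obtain ⟨h0, h1, h2, h3, h4⟩ := testBit_code_some p w d
  rw [← hbit _ (by decide)] at h0 h1 h2 h3 h4
  exact
    { alive := by simp [Planes.step, h.alive, h4]
      hi := h3
      lo := h2
      cell := by
        simp only [Planes.step, testBit_mux, h0, h.left, h.right]
        cases d <;> simp [move, unit_false, unit_true]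
      left i := by
        simp only [Planes.step, getD_merge, testBit_mux, h.testBit_cons_left, getD_tail, h.left, h0,
          h1]
        cases d with
        | false =>
          rw [cond_false, move, unit_false, update_of_ne (by omega)]
          rfl
        | true =>
          rw [cond_true, move, unit_true]
          congr 1
          omega
      right i := by
        simp only [Planes.step, getD_merge, testBit_mux, h.testBit_cons_right, getD_tail, h.right,
          h0, h1]
        cases d with
        | false =>
          rw [cond_false, move, unit_false]
          congr 1
          omega
        | true =>
          rw [cond_true, move, unit_true, update_of_ne (by omega)]
          rfl
      length := by rw [Planes.step, length_ripple, h.length]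
      count := represents_ripple h.count (by
        rw [Nat.testBit_xor, h.cell, h1]
        cases w <;> cases h0 : T 0 <;> simp_all) }

end Tracks

/-- Lane `j` of the tables `V` agrees with `g` wherever `g` is defined and at the pair `r`. -/
def Describes (V : ℕ → Pair → ℕ) (j : ℕ) (g : Machine (Fin 4)) (r : Pair) : Prop :=
  ∀ p, p = r ∨ (g p).isSome → ∀ k ≤ 4, (V k p).testBit j = (code (g p)).testBit k

theorem Tracks.of_run_succ {V : ℕ → Pair → ℕ} {P : Planes} {j N n : ℕ} {q : Fin 4} {T : Tape}
    (h : Tracks P j q T n) (hrun : run V (N + 1) P = true) :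
    ((V 4 (q, T 0)).testBit j && n.testBit 4) = false ∧ run V N (P.step V) = true := by
  have halive : P.alive ≠ 0 := fun h0 => by simpa [h0] using h.alive
  have hcount : (P.count.getD 4 0).testBit j = n.testBit 4 := h.count 4 (by simp [h.length])
  simp only [run, Bool.or_eq_true, Bool.and_eq_true, beq_iff_eq, halive, false_or] at hrun
  rw [← h.testBit_select_locate, ← hcount, ← Nat.testBit_and, hrun.1, Nat.zero_testBit]
  exact ⟨rfl, hrun.2⟩

theorem run_sound {V : ℕ → Pair → ℕ} {j t N c n n' : ℕ} {g : Machine (Fin 4)} {q q' : Fin 4}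
    {T T' : Tape} {P : Planes} (hV : Describes V j g (q', T' 0)) (h : HaltsAt g t q T q' T')
    (hN : t < N) (hrun : run V N P = true) (hP : Tracks P j q T (n + c)) (hn : ones T = n)
    (hn' : ones T' = n') : (n' + c).testBit 4 = false := by
  induction h generalizing P N n with
  | @halted q T h =>
    obtain ⟨N, rfl⟩ := Nat.exists_eq_succ_of_ne_zero (Nat.ne_zero_of_lt hN)
    obtain rfl : n = n' := by exact_mod_cast hn.symm.trans hn'
    have hhalt : (V 4 (q, T 0)).testBit j = true := by rw [hV _ (.inl rfl) 4 le_rfl, h]; rfl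
    simpa [hhalt] using (hP.of_run_succ hrun).1
  | @step t q p _ T _ w d h _ ih =>
    obtain ⟨N, rfl⟩ := Nat.exists_eq_succ_of_ne_zero (Nat.ne_zero_of_lt hN)
    obtain ⟨m, hm, hmn⟩ := exists_ones_move_eq hn w d
    have hVp : ∀ k ≤ 4, (V k (q, T 0)).testBit j = (code (some (p, w, d))).testBit k :=
      h ▸ hV (q, T 0) (.inr (by simp [h]))
    exact ih hV (by omega) (hP.of_run_succ hrun).2 (hP.step hVp (by omega)) hm hn'

/-- The lane with number `n` of the machines prescribed by `S` is `g`. -/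
def LaneOf (S : Pins) (n : ℕ) (g : Machine (Fin 4)) : Prop :=
  ∀ p ∈ freePairs S, ∀ k < 4, n.testBit (4 * (freePairs S).idxOf p + k) = (code (g p)).testBit k

theorem exists_laneOf (S : Pins) (g : Machine (Fin 4)) :
    ∃ n < 2 ^ width S, LaneOf S n g := by
  let l := freePairs S
  let bit (i : Fin (4 * l.length)) : Bool := (code (g (l[i.val / 4]))).testBit (i % 4)
  refine ⟨Nat.ofBits bit, Nat.ofBits_lt_two_pow _, fun p hp k hk => ?_⟩
  have hidx : l.idxOf p < l.length := List.idxOf_lt_length_of_mem hp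
  have hlt : 4 * l.idxOf p + k < 4 * l.length := by omega
  have hdiv : (4 * l.idxOf p + k) / 4 = l.idxOf p := by omega
  have hmod : (4 * l.idxOf p + k) % 4 = k := by omega
  rw [Nat.testBit_ofBits_lt _ _ hlt]
  simp only [bit, hdiv, hmod, List.getElem_idxOf]

theorem mem_freePairs {S : Pins} {p : Pair} : p ∈ freePairs S ↔ S.lookup p = none := by
  have : p ∈ pairs := by revert p; decide
  simp [freePairs, this]

theorem describes_table {S : Pins} {g : Machine (Fin 4)} {j : ℕ} {r : Pair} (hj : j < 2 ^ width S)
    (hS : ∀ p v, S.lookup p = some v → g p = v) (hg : LaneOf S j g)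
    (hr : S.lookup r = some none) : Describes (table S) j g r := by
  intro p hp k hk
  cases h : S.lookup p with
  | some v => rw [table, h, testBit_constPlane hj, hS p v h]
  | none =>
    have hpr : p ≠ r := by rintro rfl; simp [hr] at h
    obtain ⟨⟨q, w, d⟩, hv⟩ := Option.isSome_iff_exists.1 (hp.resolve_left hpr)
    rcases hk.lt_or_eq with hk | rfl
    · have hidx : (freePairs S).idxOf p < (freePairs S).length :=
        List.idxOf_lt_length_of_mem (mem_freePairs.2 h)
      have hbit : 4 * (freePairs S).idxOf p + k < width S := by rw [width]; omega
      simp only [table, h, if_pos hk, testBit_pattern hbit hj, hg p (mem_freePairs.2 h) k hk]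
    · simp [table, h, hv, (testBit_code_some q w d).2.2.2.2]

theorem tracks_initial {m j : ℕ} (hj : j < 2 ^ m) (b : ℕ) :
    Tracks (initial m b) j 0 blank (16 - b) where
  alive := testBit_full m hj
  hi := by simp [initial]
  lo := by simp [initial]
  cell := by simp [initial, blank]
  left i := by simp [initial, blank]
  right i := by simp [initial, blank]
  length := by simp [initial]
  count i hi := by
    have hi : i < 5 := by simpa [initial] using hi
    simp [initial, hi, testBit_constPlane hj]

theorem passes_sound {b : ℕ} {S : Pins} (hb : b ≤ 16) (hpass : passes b S = true)
    {g : Machine (Fin 4)} (hS : ∀ p v, S.lookup p = some v → g p = v) {t : ℕ} (ht : t < 95)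
    {q : Fin 4} {T : Tape} (h : HaltsAt g t 0 blank q T) (hq : S.lookup (q, T 0) = some none)
    {n : ℕ} (hn : ones T = n) : n < b ∨ b + 16 ≤ n := by
  obtain ⟨j, hj, hg⟩ := exists_laneOf S g
  have hbit := run_sound (describes_table hj hS hg hq) h ht hpass
    (by rw [zero_add]; exact tracks_initial hj b) ones_blank hn
  by_contra! hbn
  obtain ⟨k, hk⟩ := Nat.exists_eq_add_of_le (show 2 ^ 4 ≤ n + (16 - b) by omega)
  rw [hk, Nat.testBit_two_pow_add_eq, Nat.testBit_lt_two_pow (by omega)] at hbit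
  simp at hbit

/-! ### The exhaustive search -/

/-- The run that ends on `T` could be completed by overwriting the scanned cell so that twelve 1s
remain and `g` halts there. This accounts for `stay` transitions taken after the last move. -/
def LeavesTwelve {Q : Type} (g : Machine Q) (T : Tape) : Prop :=
  ∃ p w, g (p, w) = none ∧ ones (update T 0 w) = 12

theorem LeavesTwelve.exists_ones_eq {Q : Type} {g : Machine Q} {T : Tape} (h : LeavesTwelve g T) :
    ∃ n : ℕ, ones T = n ∧
      (n = 12 ∨ n = 13 ∨ n = 11 ∧ T 0 = false ∧ ∃ p, g (p, true) = none) := by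
  obtain ⟨p, w, hp, hw⟩ := h
  obtain ⟨n, hn, hnw⟩ := exists_ones_update_eq hw 0 (T 0)
  rw [update_idem, update_eq_self] at hn
  rw [update_self] at hnw
  refine ⟨n, hn, ?_⟩
  cases w <;> cases hT : T 0 <;> simp only [hT, Bool.toNat_false, Bool.toNat_true] at hnw
  · exact .inl hnw
  · exact .inr (.inl hnw)
  · exact .inr (.inr ⟨by omega, rfl, p, hp⟩)
  · exact .inl (by omega)

theorem reflect_update (m : Bool) (T : Tape) (w : Bool) :
    reflect m (update T 0 w) = update (reflect m T) 0 w := by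
  funext i
  cases m <;> simp [reflect, update_apply]

theorem LeavesTwelve.conj {Q Q' : Type} {g : Machine Q} {T : Tape} (h : LeavesTwelve g T)
    (σ : Q ≃ Q') (m : Bool) : LeavesTwelve (conj σ m g) (reflect m T) := by
  obtain ⟨p, w, hp, hw⟩ := h
  exact ⟨σ p, w, by rw [conj_apply, hp, Option.map_none], by
    rw [← reflect_update, ones_reflect, hw]⟩

/-- The first transition at `(1, false)` up to symmetry, when the machine starts by writing a 1,
moving right, and entering state 1. -/
def openings : List (Fin 4 × Bool × Bool) :=
  [(0, false, false), (0, true, false), (1, false, false), (1, true, false),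
    (2, false, false), (2, true, false), (2, false, true), (2, true, true)]

/-- The prescription fixing the first two transitions on blank cells, the second one being `v`,
and leaving the pairs in `hs` undefined. -/
def pins (v : Fin 4 × Bool × Bool) (hs : List Pair) : Pins :=
  ((0, false), some (1, true, true)) :: ((1, false), some v) :: hs.map fun p => (p, none)

theorem passes_single : ∀ v ∈ openings, ∀ p, p ≠ (0, false) → p ≠ (1, false) →
    passes 12 (pins v [p]) = true := by
  intro v hv p h0 h1
  fin_cases hv <;> fin_cases p <;> first | contradiction | decide +kernel

theorem passes_double : ∀ v ∈ openings, ∀ q, q ≠ 0 → q ≠ 1 → ∀ p,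
    passes 11 (pins v [(q, false), (p, true)]) = true := by
  intro v hv
  fin_cases hv <;> decide +kernel

theorem lookup_pins_of_mem (v : Fin 4 × Bool × Bool) {hs : List Pair} {p : Pair} (hp : p ∈ hs)
    (h0 : p ≠ (0, false)) (h1 : p ≠ (1, false)) : (pins v hs).lookup p = some none := by
  have hhs : (hs.map fun p => (p, (none : Option (Fin 4 × Bool × Bool)))).lookup p = some none := by
    induction hs with
    | nil => cases hp
    | cons r hs ih =>
      obtain rfl | h := eq_or_ne p r
      · exact List.lookup_cons_self
      · rw [List.map_cons, List.lookup_cons, beq_false_of_ne h]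
        exact ih (List.mem_of_ne_of_mem h hp)
  rw [pins, List.lookup_cons, beq_false_of_ne h0, List.lookup_cons, beq_false_of_ne h1]
  exact hhs

theorem eq_of_lookup_pins {g : Machine (Fin 4)} {v : Fin 4 × Bool × Bool} {hs : List Pair}
    (h0 : g (0, false) = some (1, true, true)) (h1 : g (1, false) = some v)
    (hhs : ∀ p ∈ hs, g p = none) {p : Pair} {u : Option (Fin 4 × Bool × Bool)}
    (hp : (pins v hs).lookup p = some u) : g p = u := by
  obtain ⟨l₁, l₂, hl, -⟩ := List.lookup_eq_some_iff.1 hp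
  have hmem : (p, u) ∈ pins v hs := hl ▸ by simp
  simp only [pins, List.mem_cons, List.mem_map, Prod.mk.injEq] at hmem
  obtain ⟨rfl, rfl⟩ | ⟨rfl, rfl⟩ | ⟨_, hr, rfl, rfl⟩ := hmem
  exacts [h0, h1, hhs _ hr]

theorem not_leavesTwelve_of_mem_openings {g : Machine (Fin 4)} {v : Fin 4 × Bool × Bool}
    (h0 : g (0, false) = some (1, true, true)) (h1 : g (1, false) = some v) (hv : v ∈ openings)
    {t : ℕ} (ht : t < 95) {q : Fin 4} {T : Tape} (h : HaltsAt g t 0 blank q T) :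
    ¬ LeavesTwelve g T := by
  intro hT
  have hnone : g (q, T 0) = none := h.eq_none
  have hq0 : (q, T 0) ≠ (0, false) := fun e => by simp [e, h0] at hnone
  have hq1 : (q, T 0) ≠ (1, false) := fun e => by simp [e, h1] at hnone
  obtain ⟨n, hn, hcases⟩ := hT.exists_ones_eq
  have hn12 : n < 12 ∨ 12 + 16 ≤ n :=
    passes_sound (by decide) (passes_single v hv _ hq0 hq1)
      (fun _ _ => eq_of_lookup_pins h0 h1 (by simpa using hnone)) ht h
      (lookup_pins_of_mem v (by simp) hq0 hq1) hn
  obtain rfl | rfl | ⟨rfl, hT0, p, hp⟩ := hcases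
  · omega
  · omega
  · rw [hT0] at hnone hq0 hq1
    have hq0' : q ≠ 0 := fun e => hq0 (by rw [e])
    have hq1' : q ≠ 1 := fun e => hq1 (by rw [e])
    have hn11 : 11 < 11 ∨ 11 + 16 ≤ 11 :=
      passes_sound (by decide) (passes_double v hv q hq0' hq1' p)
        (fun _ _ => eq_of_lookup_pins h0 h1 (by simpa using ⟨hnone, hp⟩)) ht h
        (lookup_pins_of_mem v (by simp [hT0]) (hT0 ▸ hq0) (hT0 ▸ hq1)) hn
    omega

theorem mem_openings_cases (v : Fin 4 × Bool × Bool) :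
    v ∈ openings ∨ v.1 ∈ ({0, 1} : Set (Fin 4)) ∧ v.2.2 = true ∨
      (Equiv.swap 2 3 v.1, v.2.1, v.2.2) ∈ openings := by
  revert v
  decide

theorem not_leavesTwelve_of_opening {g : Machine (Fin 4)}
    (h0 : g (0, false) = some (1, true, true)) {t : ℕ} (ht : t < 95) {q : Fin 4} {T : Tape}
    (h : HaltsAt g t 0 blank q T) : ¬ LeavesTwelve g T := by
  intro hT
  cases h1 : g (1, false) with
  | none =>
    obtain ⟨s, -, hs⟩ := h.exists_of_eq_some h0
    obtain ⟨-, rfl⟩ := hs.eq_of_eq_none h1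
    obtain ⟨n, hn, hcases⟩ := hT.exists_ones_eq
    obtain ⟨n', hn', hn1⟩ := exists_ones_move_eq ones_blank true true
    obtain rfl : n = n' := by exact_mod_cast hn.symm.trans hn'
    simp [blank] at hn1
    omega
  | some v =>
    obtain hv | ⟨hv, hd⟩ | hv := mem_openings_cases v
    · exact not_leavesTwelve_of_mem_openings h0 h1 hv ht h hT
    · refine not_haltsAt_of_escape (Z := {0, 1}) (d := true) ?_ (.inl rfl) (fun _ => rfl) h
      rintro _ (rfl | rfl)
      exacts [⟨1, .inr rfl, true, h0⟩, ⟨v.1, hv, v.2.1, by rw [h1, ← hd]⟩]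
    · let σ : Equiv.Perm (Fin 4) := Equiv.swap 2 3
      have h0' : conj σ false g (σ 0, false) = some (1, true, true) := by
        rw [conj_apply, h0]; rfl
      have h1' : conj σ false g (σ 1, false) = some (σ v.1, v.2.1, v.2.2) := by
        rw [conj_apply, h1, Option.map_some, Bool.xor_false]
      exact not_leavesTwelve_of_mem_openings h0' h1' hv ht (h.conj σ false) (hT.conj σ false)

theorem not_leavesTwelve {g : Machine (Fin 4)} {t : ℕ} (ht : t < 95) {q q' : Fin 4} {T : Tape}
    (h : HaltsAt g t q blank q' T) : ¬ LeavesTwelve g T := by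
  induction t using Nat.strong_induction_on generalizing q with
  | _ t ih =>
    intro hT
    match hg : g (q, false) with
    | none =>
      obtain ⟨-, rfl⟩ := h.eq_of_eq_none hg
      obtain ⟨n, hn, hcases⟩ := hT.exists_ones_eq
      rw [ones_blank] at hn
      have : n = 0 := by exact_mod_cast hn.symm
      omega
    | some (p, false, d) =>
      obtain ⟨s, rfl, hs⟩ := h.exists_of_eq_some hg
      rw [move_blank_false] at hs
      exact ih s s.lt_succ_self (by omega) hs hT
    | some (p, true, d) =>
      obtain rfl | hpq := eq_or_ne p q
      · refine not_haltsAt_of_escape (Z := {p}) (d := d) ?_ rfl (fun _ => rfl) h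
        rintro _ rfl
        exact ⟨_, rfl, true, hg⟩
      · obtain ⟨σ, hq, hp⟩ : ∃ σ : Equiv.Perm (Fin 4), σ q = 0 ∧ σ p = 1 :=
          MulAction.is_two_pretransitive_iff.1 (Equiv.Perm.isMultiplyPretransitive _ 2) hpq.symm
            Fin.zero_ne_one
        have hσ := h.conj σ !d
        rw [hq] at hσ
        refine not_leavesTwelve_of_opening ?_ ht hσ (hT.conj σ !d)
        rw [← hq, conj_apply, hg, Option.map_some, hp]
        cases d <;> rfl

theorem le_of_computes_count_eq_twelve {f : Pair → Option (Fin 4 × Bool × Dir)} {q : Fin 4}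
    {w : List Bool} {t : ℕ} (h : Computes f q w t) (hw : w.count true = 12) : 95 ≤ t := by
  obtain ⟨c, hsteps, hhalt, hword⟩ := h
  by_contra! ht
  obtain ⟨s, hst, q', T, hs, hT⟩ := exists_haltsAt_chase (q := q) (T := blank) hhalt t.lt_succ_self
    t.lt_succ_self hsteps rfl (by rw [eq_comm]; exact update_eq_self 0 blank)
  refine not_leavesTwelve (hst.trans_lt ht) hs
    ⟨c.state, c.tape c.head, chase_eq_none hhalt _, ?_⟩
  rw [← hT, ones_headTape, ones_eq_count_of_tapeWord hword, hw]
  rfl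

/-! ### The witness -/

theorem tape_eq_of_stepsTM_eq_some {Q : Type} {f : Q × Bool → Option (Q × Bool × Dir)} {t : ℕ}
    {c c' : Cfg Q} (h : stepsTM f t c = some c') {j : ℤ} (hj : t ≤ |j - c.head|) :
    c'.tape j = c.tape j := by
  induction t generalizing c with
  | zero =>
    obtain rfl : c = c' := by simpa [stepsTM] using h
    rfl
  | succ t ih =>
    simp only [stepsTM, stepTM, Option.bind_eq_some_iff, Option.map_eq_some_iff] at h
    obtain ⟨_, ⟨⟨p, w, d⟩, -, rfl⟩, h⟩ := h
    push_cast at hj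
    have hne : j ≠ c.head := by grind
    exact (ih h (by cases d <;> simp only [Dir.move] <;> grind)).trans (update_of_ne hne _ _)

/-- A machine that writes twelve 1s in 95 steps. -/
def champion : Pair → Option (Fin 4 × Bool × Dir)
  | (0, false) => some (1, true, .right)
  | (0, true) => some (2, false, .right)
  | (1, false) => some (0, true, .left)
  | (1, true) => some (0, true, .right)
  | (2, false) => none
  | (2, true) => some (3, true, .right)
  | (3, false) => some (3, true, .left)
  | (3, true) => some (1, false, .left)

theorem exists_stepsTM_champion : ∃ c ∈ stepsTM champion 95 (initCfg 0),
    champion (c.state, c.tape c.head) = none ∧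
      ∀ k < 191, (c.tape ((k : ℕ) - 95 : ℤ) = true ↔ 93 ≤ k ∧ k < 105) := by
  decide +kernel

theorem champion_computes : Computes champion 0 (List.replicate 12 true) 95 := by
  obtain ⟨c, hc, hhalt, hnear⟩ := exists_stepsTM_champion
  have htape (j : ℤ) : c.tape j = true ↔ -2 ≤ j ∧ j < 10 := by
    by_cases hj : 95 ≤ |j|
    · rw [tape_eq_of_stepsTM_eq_some hc (by simpa [initCfg] using hj)]
      simp only [initCfg, Bool.false_eq_true, false_iff]
      grind
    · obtain ⟨k, rfl⟩ : ∃ k : ℕ, j = k - 95 := ⟨(j + 95).toNat, by grind⟩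
      rw [hnear k (by grind)]
      omega
  refine ⟨c, hc, hhalt, -2, fun k hk => ?_, fun j hj => ?_, fun _ => by decide⟩
  · rw [List.length_replicate] at hk
    rw [List.getD_replicate _ hk, eq_comm, htape]
    omega
  · rw [htape] at hj
    rw [List.length_replicate]
    omega

end BusyBeaver

/-- K_TBB(4) = 95: among all Turing machines with at most 4
states that halt on the all-zero tape with a computed word containing exactly
BB(4) = 12 ones, the minimum number of steps taken before halting is
exactly 95. -/
theorem min_running_time_busy_beaver_4 :
    IsLeast
      {t : ℕ |
        ∃ (f : Fin 4 × Bool → Option (Fin 4 × Bool × Dir)) (w : List Bool),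
          Computes f 0 w t ∧ w.count true = 12} 95 := by
  open BusyBeaver in
  exact ⟨⟨champion, _, champion_computes, rfl⟩,
    fun _ ⟨_, _, h, hw⟩ => le_of_computes_count_eq_twelve h hw⟩
end

section
/- K_TBB(3) = 10: among all Turing machines with at most 3 states that halt on the all-zero tape with a computed word containing exactly BB(3) = 6 ones, the minimum number of steps taken before halting is exactly 10. -/
/-!
A step adds at most one `1`, so a run producing six ones in at most nine steps has at most three
steps to spare. This leaves few enough partial transition tables for an exhaustive search: guess
the pair at which the machine halts, run the table, choose a transition only when it is needed, and
abandon a branch as soon as the remaining steps cannot supply the missing ones.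
-/

open Turing (Tape)

section Machine

variable {Q : Type}

/-- Partial transition functions; these also serve as the partially filled tables of the search. -/
abbrev Machine (Q : Type) : Type := Q × Bool → Option (Q × Bool × Dir)

/-- The pair of state and scanned symbol to which a transition function is applied. -/
def Cfg.scan (c : Cfg Q) : Q × Bool := (c.state, c.tape c.head)

/-- The configuration after performing the transition `a` (new state, symbol written, move). -/
def Cfg.next (c : Cfg Q) (a : Q × Bool × Dir) : Cfg Q :=
  ⟨a.1, c.head + a.2.2.move, Function.update c.tape c.head a.2.1⟩

theorem stepsTM_succ_eq_some {f : Machine Q} {t : ℕ} {c c' : Cfg Q} :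
    stepsTM f (t + 1) c = some c' ↔
      ∃ a, f c.scan = some a ∧ stepsTM f t (c.next a) = some c' := by
  simp only [stepsTM, stepTM, Option.bind_eq_some_iff, Option.map_eq_some_iff]
  exact ⟨fun ⟨_, ⟨a, ha, rfl⟩, hc⟩ => ⟨a, ha, hc⟩, fun ⟨a, ha, hc⟩ => ⟨_, ⟨a, ha, rfl⟩, hc⟩⟩

/-- The set of positions of the symbol `1`. -/
def ones (tape : ℤ → Bool) : Set ℤ := {j | tape j = true}

theorem ones_update_true (tape : ℤ → Bool) (h : ℤ) :
    ones (Function.update tape h true) = insert h (ones tape) := by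
  ext j
  by_cases hj : j = h <;> simp [ones, hj]

theorem ones_update_false (tape : ℤ → Bool) (h : ℤ) :
    ones (Function.update tape h false) = ones tape \ {h} := by
  ext j
  by_cases hj : j = h <;> simp [ones, hj]

theorem encard_ones_update {tape : ℤ → Bool} {m : ℕ} (hm : (ones tape).encard = m) (h : ℤ)
    (b : Bool) :
    (ones (Function.update tape h b)).encard = (m + b.toNat - (tape h).toNat : ℕ) := by
  cases hs : tape h <;> cases b
  · rw [← hs, Function.update_eq_self]
    simpa [hs] using hm
  · rw [ones_update_true, Set.encard_insert_of_notMem (by simp [ones, hs]), hm]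
    simp
  · rw [ones_update_false, Set.encard_sdiff_singleton_of_mem (show h ∈ ones tape from hs), hm]
    simp
  · rw [← hs, Function.update_eq_self]
    simpa [hs] using hm

theorem encard_ones_update_le (tape : ℤ → Bool) (h : ℤ) (b : Bool) :
    (ones (Function.update tape h b)).encard ≤ (ones tape).encard + 1 := by
  cases b
  · rw [ones_update_false]
    exact (Set.encard_le_encard Set.sdiff_subset).trans le_self_add
  · rw [ones_update_true]
    exact Set.encard_insert_le _ _

theorem encard_ones_le_of_stepsTM {f : Machine Q} {t : ℕ} {c c' : Cfg Q}
    (hc : stepsTM f t c = some c') : (ones c'.tape).encard ≤ (ones c.tape).encard + t := by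
  induction t generalizing c with
  | zero => cases hc; simp
  | succ t ih =>
    obtain ⟨a, -, hc⟩ := stepsTM_succ_eq_some.1 hc
    calc (ones c'.tape).encard
      _ ≤ (ones (c.next a).tape).encard + t := ih hc
      _ ≤ (ones c.tape).encard + 1 + t := by gcongr; exact encard_ones_update_le ..
      _ = (ones c.tape).encard + (t + 1 : ℕ) := by push_cast; ring

theorem TapeWord.encard_ones {tape : ℤ → Bool} {w : List Bool} (h : TapeWord tape w) :
    (ones tape).encard = w.count true := by
  obtain ⟨i, hw, hi, -⟩ := h
  have ones_eq : ones tape =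
      (fun k : Fin w.length => i + (k : ℤ)) '' ({k | w.get k = true} : Finset (Fin w.length)) := by
    ext j
    constructor
    · intro hj
      obtain ⟨k, rfl⟩ := Int.le.dest (hi j hj).1
      have hk : k < w.length := by have := (hi _ hj).2; omega
      refine ⟨⟨k, hk⟩, ?_, rfl⟩
      simpa [hk] using (hw k hk).trans hj
    · rintro ⟨⟨k, hk⟩, hwk, rfl⟩
      exact (hw k hk).symm.trans (by simpa [hk] using hwk)
  have shift_injective : Function.Injective fun k : Fin w.length => i + (k : ℤ) :=
    fun k l hkl => Fin.ext (by simpa using hkl)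
  rw [ones_eq, shift_injective.encard_image, Set.encard_coe_eq_coe_finsetCard]
  exact congrArg _ (Fin.card_filter_univ_eq_vector_get_eq_count true ⟨w, rfl⟩)

theorem tapeWord_replicate (i : ℤ) (n : ℕ) :
    TapeWord (fun j => decide (i ≤ j ∧ j < i + n)) (List.replicate n true) := by
  refine ⟨i, fun k hk => ?_, fun j hj => by simpa using hj, fun hn => ?_⟩
  · rw [List.length_replicate] at hk
    simp [hk]
  · have : 0 < n := by
      rw [pos_iff_ne_zero]
      rintro rfl
      exact hn rfl
    simp [this, List.getLastD_eq_getLast?, List.getLast?_replicate, this.ne']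

theorem Dir.forall {p : Dir → Prop} : (∀ d, p d) ↔ p .left ∧ p .stay ∧ p .right :=
  ⟨fun h => ⟨h _, h _, h _⟩, fun ⟨hl, hs, hr⟩ d => by cases d <;> assumption⟩

instance {p : Dir → Prop} [DecidablePred p] : Decidable (∀ d, p d) :=
  decidable_of_iff' _ Dir.forall

/-- Head movement on Mathlib's tapes, which are stored relative to the head. -/
def Dir.moveTape {Γ : Type*} [Inhabited Γ] : Dir → Tape Γ → Tape Γ
  | .left => Tape.move .left
  | .stay => id
  | .right => Tape.move .right

theorem Dir.nth_moveTape {Γ : Type*} [Inhabited Γ] (d : Dir) (T : Tape Γ) (i : ℤ) :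
    (d.moveTape T).nth i = T.nth (i + d.move) := by
  cases d <;> simp [Dir.moveTape, Dir.move, sub_eq_add_neg]

/-- `f` agrees with the partially filled table `g` wherever `g` is defined. -/
def Extends (f g : Machine Q) : Prop := ∀ x a, g x = some a → f x = some a

theorem Extends.update [DecidableEq Q] {f g : Machine Q} (hg : Extends f g) {x : Q × Bool}
    {a : Q × Bool × Dir} (ha : f x = some a) : Extends f (Function.update g x (some a)) := by
  intro y b hb
  rw [Function.update_apply] at hb
  split_ifs at hb with hy
  · rw [hy, ha, hb]
  · exact hg y b hb

/-- The search holds a configuration as a state, a tape centred at the head and the number of ones,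
so that the kernel can evaluate a step cheaply. -/
structure Represents (c : Cfg Q) (q : Q) (T : Tape Bool) (m : ℕ) : Prop where
  state_eq : c.state = q
  nth_eq : ∀ i, c.tape (c.head + i) = T.nth i
  encard_ones : (ones c.tape).encard = m

theorem represents_initCfg (q : Q) : Represents (initCfg q) q (Tape.mk₁ []) 0 where
  state_eq := rfl
  nth_eq i := by
    rcases i with (_ | i) | i <;> simp [initCfg, Tape.nth, Tape.mk₁, Tape.mk₂, Tape.mk']
  encard_ones := by simp [ones, initCfg]

section Represents

variable {c : Cfg Q} {q : Q} {T : Tape Bool} {m : ℕ}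

theorem Represents.tape_head (h : Represents c q T m) : c.tape c.head = T.head := by
  simpa using h.nth_eq 0

theorem Represents.scan_eq (h : Represents c q T m) : c.scan = (q, T.head) := by
  rw [Cfg.scan, h.state_eq, h.tape_head]

theorem Represents.next (h : Represents c q T m) (q' : Q) (b : Bool) (d : Dir) :
    Represents (c.next (q', b, d)) q' (d.moveTape (T.write b)) (m + b.toNat - T.head.toNat) where
  state_eq := rfl
  nth_eq i := by
    rw [Dir.nth_moveTape, Tape.write_nth, ← h.nth_eq]
    simp only [Cfg.next, Function.update_apply]
    grind
  encard_ones := h.tape_head ▸ encard_ones_update h.encard_ones c.head b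

end Represents

end Machine

section Search

variable {N : ℕ}

/-- Exhaustive search for a completion of the table `g` which is undefined at `h` and which, started
in state `q` on the tape `T` with `m` ones, arrives at `h` with exactly `k` ones after at most `n`
steps; the result is `true` if there is none. The symbol `b` is chosen before the move and the new
state because it alone decides whether the remaining steps can still produce `k` ones. Matching on
the constructor of `T` forces its evaluation. -/
def excludes (k : ℕ) (h : Fin N × Bool) : ℕ → Machine (Fin N) → Fin N → Tape Bool → ℕ → Bool
  | 0, _, q, T, m => m ≠ k || (q, T.head) ≠ h
  | n + 1, g, q, T@⟨s, _, _⟩, m =>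
    match g (q, s) with
    | some (q', b, d) =>
      m + b.toNat - s.toNat + n < k ||
        excludes k h n g q' (d.moveTape (T.write b)) (m + b.toNat - s.toNat)
    | none =>
      if (q, s) = h then m ≠ k else
        ∀ b, m + b.toNat - s.toNat + n < k || ∀ d, (List.finRange N).all fun q' =>
          excludes k h n (Function.update g (q, s) (some (q', b, d))) q'
            (d.moveTape (T.write b)) (m + b.toNat - s.toNat)

variable {k n m : ℕ} {h : Fin N × Bool} {f g : Machine (Fin N)} {q q' : Fin N} {T : Tape Bool}
  {b : Bool} {d : Dir}

theorem ne_of_excludes (hs : excludes k h n g q T m = true) (hg : g h = none)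
    (hq : (q, T.head) = h) : m ≠ k := by
  subst hq
  obtain ⟨s, L, R⟩ := T
  cases n <;> simpa [excludes, hg] using hs

theorem exists_extends_of_excludes_succ (hs : excludes k h (n + 1) g q T m = true)
    (hg : Extends f g) (hh : f h = none) (ha : f (q, T.head) = some (q', b, d))
    (hk : k ≤ m + b.toNat - T.head.toNat + n) :
    ∃ g', Extends f g' ∧
      excludes k h n g' q' (d.moveTape (T.write b)) (m + b.toNat - T.head.toNat) = true := by
  obtain ⟨s, L, R⟩ := T
  cases hgq : g (q, s) with
  | some a =>
    obtain rfl : a = (q', b, d) := Option.some.inj ((hg _ _ hgq).symm.trans ha)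
    exact ⟨g, hg, by simpa [excludes, hgq, hk.not_gt] using hs⟩
  | none =>
    have hne : (q, s) ≠ h := by
      rintro rfl
      simp [hh] at ha
    simp only [excludes, hgq, hne, if_false, decide_eq_true_eq] at hs
    have hb := hs b
    simp only [hk.not_gt, decide_false, Bool.false_or, decide_eq_true_eq, List.all_eq_true] at hb
    exact ⟨_, hg.update ha, hb d q' (List.mem_finRange q')⟩

theorem encard_ones_ne_of_excludes (hs : excludes k h n g q T m = true) (hg : Extends f g)
    (hh : f h = none) {c c' : Cfg (Fin N)} (hc : Represents c q T m) {t : ℕ} (ht : t ≤ n)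
    (hc' : stepsTM f t c = some c') (hh' : c'.scan = h) : (ones c'.tape).encard ≠ k := by
  induction t generalizing n g q T m c with
  | zero =>
    cases hc'
    have hgh : g h = none := by
      by_contra hne
      obtain ⟨a, ha⟩ := Option.ne_none_iff_exists'.1 hne
      simpa [hh] using hg h a ha
    rw [hc.encard_ones]
    exact_mod_cast ne_of_excludes hs hgh (hc.scan_eq.symm.trans hh')
  | succ t ih =>
    obtain ⟨n, rfl⟩ := Nat.exists_eq_succ_of_ne_zero (Nat.ne_zero_of_lt ht)
    obtain ⟨⟨q', b, d⟩, ha, hc'⟩ := stepsTM_succ_eq_some.1 hc'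
    rw [hc.scan_eq] at ha
    have hnext := hc.next q' b d
    intro hk
    have enough_steps : k ≤ m + b.toNat - T.head.toNat + n := by
      have := encard_ones_le_of_stepsTM hc'
      rw [hk, hnext.encard_ones] at this
      norm_cast at this
      omega
    obtain ⟨g', hg', hs'⟩ := exists_extends_of_excludes_succ hs hg hh ha enough_steps
    exact ih hs' hg' hnext (Nat.le_of_succ_le_succ ht) hc' hk

theorem lt_of_excludes {q₀ : Fin N} {w : List Bool} {t : ℕ}
    (hs : ∀ q b, excludes k (q, b) n (fun _ => none) q₀ (Tape.mk₁ []) 0 = true)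
    (hf : Computes f q₀ w t) (hw : w.count true = k) : n < t := by
  obtain ⟨c, hc, hhalt, hword⟩ := hf
  by_contra! ht
  refine encard_ones_ne_of_excludes (hs c.state (c.tape c.head)) (f := f) (fun _ _ => nofun) hhalt
    (represents_initCfg q₀) ht hc rfl ?_
  rw [hword.encard_ones, hw]

end Search

/-- A three-state machine that halts after ten steps with six ones. -/
def champion : Machine (Fin 3)
  | (0, false) => some (1, true, .left)
  | (1, false) => some (2, true, .left)
  | (2, false) => some (0, true, .right)
  | (0, true) => some (2, true, .right)
  | (2, true) => some (1, false, .right)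
  | (1, true) => none

theorem stepsTM_champion :
    stepsTM champion 10 (initCfg 0) = some ⟨1, 2, fun j => decide (-2 ≤ j ∧ j < -2 + (6 : ℕ))⟩ := by
  change some (Cfg.mk 1 2 _) = _
  congr 2
  funext j
  simp only [Function.update_apply, initCfg, Dir.move]
  grind

theorem excludes_six_nine : ∀ (q : Fin 3) (b : Bool),
    excludes 6 (q, b) 9 (fun _ => none) 0 (Tape.mk₁ []) 0 = true
  -- Separate computations for the three halting states keep the memory use moderate.
  | 0 | 1 | 2 => by decide +kernel

/-- K_TBB(3) = 10: among all Turing machines with at most 3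
states that halt on the all-zero tape with a computed word containing exactly
BB(3) = 6 ones, the minimum number of steps taken before halting is
exactly 10. -/
theorem min_running_time_busy_beaver_3 :
    IsLeast
      {t : ℕ |
        ∃ (f : Fin 3 × Bool → Option (Fin 3 × Bool × Dir)) (w : List Bool),
          Computes f 0 w t ∧ w.count true = 6} 10 := by
  constructor
  · exact ⟨champion, List.replicate 6 true,
      ⟨_, stepsTM_champion, rfl, tapeWord_replicate (-2) 6⟩, List.count_replicate_self⟩
  · rintro t ⟨f, w, hf, hw⟩
    exact lt_of_excludes excludes_six_nine hf hw
end
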